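/- For every t > 0, the lower limit of the sequence n ↦ |tC_n^eucl|_Rips satisfies liminf_{n→∞} |tC_n^eucl|_Rips = e^{−2t} + 2πt. -/

import Mathlib

open scoped BigOperators Real

/-- The Rips magnitude function of a finite subset `A` of a metric space:
`|tA|_Rips = Σ_{∅ ≠ B ⊆ A} (−1)^{#B−1} e^{−diam(B)·t}`. -/
noncomputable def ripsMag {Y : Type*} [MetricSpace Y] (A : Finset Y) (t : ℝ) : ℝ :=
  ∑ B ∈ A.powerset.filter (fun B => B.Nonempty),
    (-1 : ℝ) ^ (B.card - 1) * Real.exp (-(Metric.diam (B : Set Y)) * t)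


/-- The Euclidean cycle `C_n^eucl`: `n` equally spaced points on the unit circle
in `ℝ² = ℂ`, with the Euclidean metric. -/
noncomputable def euclCycle (n : ℕ) : Finset ℂ :=
  (Finset.range n).image
    (fun k : ℕ => Complex.exp (2 * (π : ℂ) * (k : ℂ) / (n : ℂ) * Complex.I))

lemma natCast_zmod_injective_of_lt {n i j : ℕ} (hi : i < n) (hj : j < n)
    (h : (i : ZMod n) = j) : i = j := by
  have := congrArg ZMod.val h
  rwa [ZMod.val_cast_of_lt hi, ZMod.val_cast_of_lt hj] at this

/-- `d` is a difference of two points of `ℤ/n` whose cyclic distance exceeds `k`. -/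
def IsFar {n : ℕ} (k : ℕ) (d : ZMod n) : Prop :=
  ∃ m : ℕ, k < m ∧ m + k < n ∧ (m : ZMod n) = d

lemma IsFar.neg {n k : ℕ} {d : ZMod n} (h : IsFar k d) : IsFar k (-d) := by
  obtain ⟨m, h1, h2, rfl⟩ := h
  refine ⟨n - m, by omega, by omega, ?_⟩
  rw [Nat.cast_sub (by omega)]
  simp

lemma isFar_neg_iff {n k : ℕ} {d : ZMod n} : IsFar k (-d) ↔ IsFar k d :=
  ⟨fun h => by simpa using h.neg, IsFar.neg⟩

lemma isFar_sub_comm {n k : ℕ} {x y : ZMod n} : IsFar k (x - y) ↔ IsFar k (y - x) := by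
  rw [← isFar_neg_iff, neg_sub]

lemma not_isFar_zero {n k : ℕ} : ¬ IsFar k (0 : ZMod n) := by
  rintro ⟨m, h1, h2, h3⟩
  rw [ZMod.natCast_eq_zero_iff] at h3
  exact absurd (Nat.le_of_dvd (by omega) h3) (by omega)

lemma IsFar.eq_neg_of_sub_one {n k : ℕ} {d : ZMod n} (h : IsFar k (d - 1)) (h' : ¬ IsFar k d) :
    d = -k := by
  obtain ⟨m, h1, h2, h3⟩ := h
  have hd : d = ((m + 1 : ℕ) : ZMod n) := by push_cast; rw [h3]; ring
  by_cases hm : m + 1 + k < n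
  · exact absurd ⟨m + 1, by omega, hm, hd.symm⟩ h'
  · rw [hd, eq_neg_iff_add_eq_zero, ← Nat.cast_add, show m + 1 + k = n by omega]
    simp

lemma IsFar.eq_of_add_one {n k : ℕ} {d : ZMod n} (h : IsFar k (d + 1)) (h' : ¬ IsFar k d) :
    d = k := by
  have := IsFar.eq_neg_of_sub_one (d := -d) (k := k)
    (by rw [← isFar_neg_iff]; simpa [add_comm] using h) (by rwa [isFar_neg_iff])
  simpa using this

lemma isFar_add_one {n k : ℕ} (hk : 2 * k + 2 ≤ n) : IsFar k ((k : ZMod n) + 1) :=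
  ⟨k + 1, by omega, by omega, by push_cast; rfl⟩

/-- A difference that is not far is `± j` with `j ≤ k`. -/
lemma exists_natCast_of_not_isFar {n k : ℕ} [NeZero n] {d : ZMod n} (h : ¬ IsFar k d) :
    ∃ j ≤ k, d = j ∨ d = -j := by
  have hv := ZMod.val_lt d
  by_cases h1 : d.val ≤ k
  · exact ⟨d.val, h1, Or.inl (by simp)⟩
  · refine ⟨n - d.val, ?_, Or.inr ?_⟩
    · by_contra h2
      exact h ⟨d.val, by omega, by omega, by simp⟩
    · rw [Nat.cast_sub hv.le]; simp

/-- `x` is within cyclic distance `k` of all points of `A`. -/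
def IsNearAll {n : ℕ} (k : ℕ) (A : Finset (ZMod n)) (x : ZMod n) : Prop :=
  ∀ y ∈ A, ¬ IsFar k (x - y)

/-- All points of `A` are within cyclic distance `k` of each other. -/
def IsCyclicClique {n : ℕ} (k : ℕ) (A : Finset (ZMod n)) : Prop :=
  ∀ x ∈ A, IsNearAll k A x

/-- `s` is the first point of `A` in a maximal arc of points near all of `A`,
and the successor of `s` still belongs to that arc. -/
def IsExtendableStart {n : ℕ} (k : ℕ) (A : Finset (ZMod n)) (s : ZMod n) : Prop :=
  s ∈ A ∧ IsNearAll k A (s + 1) ∧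
    ∃ j : ℕ, ¬ IsNearAll k A (s - j) ∧ ∀ i : ℕ, 1 ≤ i → i ≤ j → s - i ∉ A

lemma IsCyclicClique.mono {n k : ℕ} {A B : Finset (ZMod n)} (hB : IsCyclicClique k B)
    (h : A ⊆ B) : IsCyclicClique k A :=
  fun x hx y hy => hB x (h hx) y (h hy)

protected lemma IsCyclicClique.insert {n k : ℕ} {A : Finset (ZMod n)} {x : ZMod n}
    (hA : IsCyclicClique k A) (hx : IsNearAll k A x) : IsCyclicClique k (insert x A) := by
  intro y hy z hz
  rw [Finset.mem_insert] at hy hz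
  rcases hy with rfl | hy <;> rcases hz with rfl | hz
  · simpa using not_isFar_zero
  · exact hx z hz
  · rw [isFar_sub_comm]; exact hx y hy
  · exact hA y hy z hz

/-- Every point of a clique whose successor is near all of `A` gives an extendable start. -/
lemma IsCyclicClique.exists_isExtendableStart {n k : ℕ} (hk : 2 * k + 2 ≤ n)
    {A : Finset (ZMod n)} (hA : IsCyclicClique k A) {a : ZMod n} (ha : a ∈ A)
    (ha' : IsNearAll k A (a + 1)) : ∃ s, IsExtendableStart k A s := by
  classical
  have hex : ∃ j : ℕ, ¬ IsNearAll k A (a - j) := by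
    refine ⟨k + 1, fun h => h a ha ?_⟩
    rw [isFar_sub_comm]
    simpa using isFar_add_one hk
  set j := Nat.find hex with hj
  have hjs : ¬ IsNearAll k A (a - j) := Nat.find_spec hex
  have hjm : ∀ i < j, IsNearAll k A (a - i) := fun i hi => not_not.1 (Nat.find_min hex hi)
  have hj0 : 0 < j := by
    rcases Nat.eq_zero_or_pos j with h | h
    · rw [h] at hjs
      exact absurd (hA a ha) (by simpa using hjs)
    · exact h
  set i := Nat.findGreatest (fun i => a - (i : ZMod n) ∈ A) (j - 1) with hi
  have his : a - (i : ZMod n) ∈ A :=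
    Nat.findGreatest_spec (P := fun i => a - (i : ZMod n) ∈ A) (Nat.zero_le (j - 1))
      (by simpa using ha)
  have hij : i ≤ j - 1 := Nat.findGreatest_le _
  refine ⟨a - i, his, ?_, j - i, ?_, ?_⟩
  · rcases Nat.eq_zero_or_pos i with h | h
    · rw [h]; simpa using ha'
    · have := hjm (i - 1) (by omega)
      rw [Nat.cast_sub h] at this
      convert this using 1
      push_cast; ring
  · convert hjs using 2
    rw [Nat.cast_sub (by omega)]; ring
  · intro l hl hlj hmem
    rcases Nat.lt_or_ge (i + l) j with h | h
    · refine Nat.findGreatest_is_greatest (P := fun i => a - (i : ZMod n) ∈ A) (n := j - 1)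
        (k := i + l) (by omega) (by omega) ?_
      convert hmem using 1
      push_cast; ring
    · apply hjs
      convert hA _ hmem using 1
      rw [show l = j - i by omega, Nat.cast_sub (by omega)]; ring

/-- Inserting the successor of a point of a clique does not affect the extendable starts. -/
lemma isExtendableStart_insert_iff {n k : ℕ} (hk : 2 * k + 2 ≤ n)
    {A : Finset (ZMod n)} (hA : IsCyclicClique k A) {u : ZMod n} (hu : u ∈ A)
    (hu' : IsNearAll k A (u + 1)) (s : ZMod n) :
    IsExtendableStart k (insert (u + 1) A) s ↔ IsExtendableStart k A s := by
  have near_insert : ∀ x, IsNearAll k (insert (u + 1) A) x ↔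
      ¬ IsFar k (x - (u + 1)) ∧ IsNearAll k A x := fun x => by
    simp [IsNearAll]
  constructor
  · rintro ⟨hs, hs', j, hj, hji⟩
    have hj1 : 1 ≤ j := by
      rcases Nat.eq_zero_or_pos j with rfl | h
      · exact absurd (by simpa using hA.insert hu' s hs) hj
      · exact h
    have hsA : s ∈ A := by
      rcases Finset.mem_insert.1 hs with rfl | h
      · have hmem : u ∈ insert (u + 1) A := Finset.mem_insert_of_mem hu
        have := hji 1 le_rfl hj1
        rw [Nat.cast_one, add_sub_cancel_right] at this
        exact absurd hmem this
      · exact h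
    have hjA : ∀ i : ℕ, 1 ≤ i → i ≤ j → s - (i : ZMod n) ∉ A := fun i h1 h2 h =>
      hji i h1 h2 (Finset.mem_insert_of_mem h)
    refine ⟨hsA, ((near_insert _).1 hs').2, ?_⟩
    by_cases hjn : IsNearAll k A (s - j)
    · have hfar : IsFar k (s - (j : ZMod n) - u - 1) := by
        by_contra h
        exact hj ((near_insert _).2 ⟨by rwa [← sub_sub], hjn⟩)
      have heq := hfar.eq_neg_of_sub_one (hjn u hu)
      have hfar' : IsFar k (s - ((j + 1 : ℕ) : ZMod n) - u) := by
        rw [show s - ((j + 1 : ℕ) : ZMod n) - u = -(k + 1) by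
          push_cast; linear_combination heq]
        exact (isFar_add_one hk).neg
      refine ⟨j + 1, fun h => h u hu hfar', fun i h1 h2 h => ?_⟩
      rcases Nat.lt_or_ge i (j + 1) with h3 | h3
      · exact hjA i h1 (by omega) h
      · obtain rfl : i = j + 1 := by omega
        exact hA _ h u hu hfar'
    · exact ⟨j, hjn, hjA⟩
  · rintro ⟨hs, hs', j, hj, hji⟩
    refine ⟨Finset.mem_insert_of_mem hs, (near_insert _).2 ⟨?_, hs'⟩, j,
      fun h => hj ((near_insert _).1 h).2, fun i h1 h2 h => ?_⟩
    · simpa using hA s hs u hu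
    · rcases Finset.mem_insert.1 h with h | h
      · rcases Nat.lt_or_ge i j with h3 | h3
        · refine hji (i + 1) (by omega) (by omega) ?_
          convert hu using 1
          push_cast; linear_combination h
        · obtain rfl : i = j := by omega
          exact hj (h ▸ hu')
      · exact hji i h1 h2 h

/-- Insert `x` if it is missing, remove it otherwise. -/
def Finset.toggle {α : Type*} [DecidableEq α] (A : Finset α) (x : α) : Finset α :=
  if x ∈ A then A.erase x else insert x A

lemma Finset.toggle_toggle {α : Type*} [DecidableEq α] (A : Finset α) (x : α) :
    (A.toggle x).toggle x = A := by
  by_cases h : x ∈ A <;> simp [Finset.toggle, h]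

lemma Finset.neg_one_pow_card_toggle {α : Type*} [DecidableEq α] (A : Finset α) (x : α) :
    (-1 : ℝ) ^ (A.toggle x).card = -(-1) ^ A.card := by
  by_cases h : x ∈ A
  · rw [← Finset.card_erase_add_one h]
    simp [Finset.toggle, h, pow_succ]
  · simp [Finset.toggle, h, pow_succ]

lemma IsExtendableStart.toggle {n k : ℕ} (hk : 2 * k + 2 ≤ n) {A : Finset (ZMod n)}
    (hA : IsCyclicClique k A) {u : ZMod n} (hu : IsExtendableStart k A u) :
    IsCyclicClique k (A.toggle (u + 1)) ∧
      ∀ s, IsExtendableStart k (A.toggle (u + 1)) s ↔ IsExtendableStart k A s := by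
  by_cases h : u + 1 ∈ A
  · have hne : u ≠ u + 1 := by
      intro h'
      have : Fact (1 < n) := ⟨by omega⟩
      simp at h'
    have hmono := hA.mono (Finset.erase_subset (u + 1) A)
    rw [Finset.toggle, if_pos h]
    refine ⟨hmono, fun s => ?_⟩
    rw [← isExtendableStart_insert_iff hk hmono (Finset.mem_erase.2 ⟨hne, hu.1⟩)
      (fun y hy => hu.2.1 y (Finset.mem_of_mem_erase hy)) s, Finset.insert_erase h]
  · rw [Finset.toggle, if_neg h]
    exact ⟨hA.insert hu.2.1, isExtendableStart_insert_iff hk hA hu.1 hu.2.1⟩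

open Classical in
/-- The Euler characteristic of the clique complex of the `k`-th power of the `n`-cycle. -/
noncomputable def cyclicEuler (n k : ℕ) [NeZero n] : ℝ :=
  ∑ A : Finset (ZMod n) with A.Nonempty ∧ IsCyclicClique k A, (-1 : ℝ) ^ (A.card - 1)

lemma neg_one_pow_card_sub_one {α : Type*} {A : Finset α} (h : A.Nonempty) :
    (-1 : ℝ) ^ (A.card - 1) = -(-1) ^ A.card := by
  obtain ⟨c, hc⟩ := Nat.exists_eq_add_of_lt h.card_pos
  rw [hc]
  simp [pow_succ]

open Classical in
/-- Only cliques without extendable starts contribute to the Euler characteristic. -/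
lemma cyclicEuler_eq_sum_critical {n k : ℕ} [NeZero n] (hk : 2 * k + 2 ≤ n) :
    cyclicEuler n k = ∑ A : Finset (ZMod n) with
      (A.Nonempty ∧ IsCyclicClique k A) ∧ ¬ ∃ s, IsExtendableStart k A s,
        (-1 : ℝ) ^ (A.card - 1) := by
  rw [cyclicEuler, ← Finset.sum_filter_add_sum_filter_not _
    (fun A => ∃ s, IsExtendableStart k A s), Finset.filter_filter, Finset.filter_filter,
    add_eq_right]
  let start : Finset (ZMod n) → ZMod n := fun A => Classical.epsilon (IsExtendableStart k A)
  have start_spec : ∀ A, (∃ s, IsExtendableStart k A s) → IsExtendableStart k A (start A) :=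
    fun A h => Classical.epsilon_spec h
  have start_toggle : ∀ A, IsCyclicClique k A → (∃ s, IsExtendableStart k A s) →
      start (A.toggle (start A + 1)) = start A := fun A hA h => by
    simp only [start]
    congr 1
    funext s
    exact propext (((start_spec A h).toggle hk hA).2 s)
  have mem_toggle : ∀ A, IsCyclicClique k A → (∃ s, IsExtendableStart k A s) →
      IsExtendableStart k (A.toggle (start A + 1)) (start A) := fun A hA h =>
    (((start_spec A h).toggle hk hA).2 _).2 (start_spec A h)
  refine Finset.sum_involution (fun A _ => A.toggle (start A + 1)) ?_ ?_ ?_ ?_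
  · intro A hA
    simp only [Finset.mem_filter, Finset.mem_univ, true_and] at hA
    rw [neg_one_pow_card_sub_one hA.1.1,
      neg_one_pow_card_sub_one ⟨_, (mem_toggle A hA.1.2 hA.2).1⟩,
      Finset.neg_one_pow_card_toggle]
    ring
  · intro A hA _ h
    have := Finset.neg_one_pow_card_toggle A (start A + 1)
    rw [h, self_eq_neg] at this
    simp at this
  · intro A hA
    simp only [Finset.mem_filter, Finset.mem_univ, true_and] at hA ⊢
    exact ⟨⟨⟨_, (mem_toggle A hA.1.2 hA.2).1⟩, ((start_spec A hA.2).toggle hk hA.1.2).1⟩,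
      ⟨_, mem_toggle A hA.1.2 hA.2⟩⟩
  · intro A hA
    simp only [Finset.mem_filter, Finset.mem_univ, true_and] at hA
    simp only [start_toggle A hA.1.2 hA.2, Finset.toggle_toggle]

/-- A clique without extendable starts is closed under translation by `-k`. -/
lemma IsCyclicClique.sub_mem {n k : ℕ} (hk : 2 * k + 2 ≤ n) {A : Finset (ZMod n)}
    (hA : IsCyclicClique k A) (h : ¬ ∃ s, IsExtendableStart k A s) {a : ZMod n} (ha : a ∈ A) :
    a - k ∈ A := by
  have h1 : ¬ IsNearAll k A (a + 1) := fun h' => h (hA.exists_isExtendableStart hk ha h')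
  simp only [IsNearAll, not_forall, not_not] at h1
  obtain ⟨y, hy, hfar⟩ := h1
  have : a - y = k := IsFar.eq_of_add_one (by convert hfar using 1; ring) (hA a ha y hy)
  rwa [← this, sub_sub_cancel]

/-- A clique closed under translation by `-k` has an odd number of points. -/
lemma IsCyclicClique.odd_card {n k : ℕ} [NeZero n] (hk : 2 * k + 2 ≤ n) {A : Finset (ZMod n)}
    (hA : IsCyclicClique k A) (hne : A.Nonempty) (hsub : ∀ a ∈ A, a - (k : ZMod n) ∈ A) :
    Odd A.card := by
  classical
  have himg : A.image (fun a => a - (k : ZMod n)) = A :=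
    Finset.eq_of_subset_of_card_le (Finset.image_subset_iff.2 hsub)
      (Finset.card_image_of_injective _ (sub_left_injective)).ge
  have hadd : ∀ a ∈ A, a + (k : ZMod n) ∈ A := fun a ha => by
    rw [← himg] at ha
    obtain ⟨b, hb, rfl⟩ := Finset.mem_image.1 ha
    simpa using hb
  obtain ⟨a, ha⟩ := hne
  rcases Nat.eq_zero_or_pos k with rfl | hkpos
  · have : A = {a} := by
      refine Finset.eq_singleton_iff_unique_mem.2 ⟨ha, fun x hx => ?_⟩
      obtain ⟨j, hj, h⟩ := exists_natCast_of_not_isFar (hA x hx a ha)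
      obtain rfl : j = 0 := by omega
      simpa [sub_eq_zero] using h
    simp [this]
  let P := A.filter fun x => ∃ i : ℕ, i < k ∧ x = a + i
  let Q := A.filter fun x => ∃ i : ℕ, 1 ≤ i ∧ i ≤ k ∧ x = a - i
  have hPQ : P.card = Q.card := by
    refine Finset.card_bij' (fun x _ => x - (k : ZMod n)) (fun x _ => x + (k : ZMod n))
      ?_ ?_ (by simp) (by simp)
    · intro x hx
      obtain ⟨hxA, i, hi, rfl⟩ := Finset.mem_filter.1 hx
      refine Finset.mem_filter.2 ⟨hsub _ hxA, k - i, by omega, by omega, ?_⟩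
      rw [Nat.cast_sub hi.le]; ring
    · intro x hx
      obtain ⟨hxA, i, hi, hik, rfl⟩ := Finset.mem_filter.1 hx
      refine Finset.mem_filter.2 ⟨hadd _ hxA, k - i, by omega, ?_⟩
      rw [Nat.cast_sub hik]; ring
  have hnot : a + (k : ZMod n) ∉ P ∪ Q := by
    simp only [P, Q, Finset.mem_union, Finset.mem_filter, not_or]
    constructor
    · rintro ⟨-, i, hi, h⟩
      have := natCast_zmod_injective_of_lt (by omega) (by omega) (add_left_cancel h)
      omega
    · rintro ⟨-, i, hi, hik, h⟩
      have h' : ((k + i : ℕ) : ZMod n) = (0 : ℕ) := by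
        push_cast; linear_combination h
      have := natCast_zmod_injective_of_lt (by omega) (by omega) h'
      omega
  have hdisj : Disjoint P Q := by
    rw [Finset.disjoint_left]
    intro x hx hx'
    obtain ⟨-, i, hi, rfl⟩ := Finset.mem_filter.1 hx
    obtain ⟨-, j, hj, hjk, h⟩ := Finset.mem_filter.1 hx'
    have h' : ((i + j : ℕ) : ZMod n) = (0 : ℕ) := by
      push_cast; linear_combination h
    have := natCast_zmod_injective_of_lt (by omega) (by omega) h'
    omega
  have hAeq : A = insert (a + (k : ZMod n)) (P ∪ Q) := by
    ext x
    simp only [P, Q, Finset.mem_insert, Finset.mem_union, Finset.mem_filter]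
    constructor
    · intro hx
      obtain ⟨j, hj, h | h⟩ := exists_natCast_of_not_isFar (hA x hx a ha)
      · have hxj : x = a + j := by linear_combination h
        rcases Nat.lt_or_ge j k with h1 | h1
        · exact Or.inr (Or.inl ⟨hx, j, h1, hxj⟩)
        · obtain rfl : j = k := by omega
          exact Or.inl hxj
      · have hxj : x = a - j := by linear_combination h
        rcases Nat.eq_zero_or_pos j with rfl | h1
        · exact Or.inr (Or.inl ⟨hx, 0, hkpos, by simpa using hxj⟩)
        · exact Or.inr (Or.inr ⟨hx, j, h1, hj, hxj⟩)
    · rintro (rfl | h | h)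
      · exact hadd a ha
      · exact h.1
      · exact h.1
  rw [hAeq, Finset.card_insert_of_notMem hnot, Finset.card_union_of_disjoint hdisj, hPQ]
  exact ⟨Q.card, by ring⟩

lemma cyclicEuler_nonneg {n k : ℕ} [NeZero n] (hk : 2 * k + 2 ≤ n) : 0 ≤ cyclicEuler n k := by
  classical
  rw [cyclicEuler_eq_sum_critical hk]
  refine Finset.sum_nonneg fun A hA => ?_
  simp only [Finset.mem_filter, Finset.mem_univ, true_and] at hA
  rw [neg_one_pow_card_sub_one hA.1.1,
    (hA.1.2.odd_card hk hA.1.1 fun a ha => hA.1.2.sub_mem hk hA.2 ha).neg_one_pow]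
  norm_num

lemma cyclicEuler_eq_zero_of_prime {p k : ℕ} [hp : Fact p.Prime] (hk0 : k ≠ 0)
    (hk : 2 * k + 2 ≤ p) : cyclicEuler p k = 0 := by
  classical
  rw [cyclicEuler_eq_sum_critical hk]
  refine Finset.sum_eq_zero fun A hA => ?_
  simp only [Finset.mem_filter, Finset.mem_univ, true_and] at hA
  obtain ⟨⟨⟨a, ha⟩, hclique⟩, hcrit⟩ := hA
  have hmul : ∀ m : ℕ, a - m * (k : ZMod p) ∈ A := fun m => by
    induction m with
    | zero => simpa using ha
    | succ m ih =>
      convert hclique.sub_mem hk hcrit ih using 1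
      push_cast; ring
  have hk' : (k : ZMod p) ≠ 0 := by
    rw [Ne, ZMod.natCast_eq_zero_iff]
    exact fun h => absurd (Nat.le_of_dvd (by omega) h) (by omega)
  have hmem := hmul (((k : ZMod p) + 1) / k).val
  rw [ZMod.natCast_zmod_val, div_mul_cancel₀ _ hk'] at hmem
  exact absurd (by simpa using isFar_add_one hk) (hclique a ha _ hmem)

lemma cyclicEuler_zero (n : ℕ) [NeZero n] : cyclicEuler n 0 = n := by
  classical
  have : (Finset.univ.filter fun A : Finset (ZMod n) => A.Nonempty ∧ IsCyclicClique 0 A) =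
      Finset.powersetCard 1 Finset.univ := by
    ext A
    simp only [Finset.mem_filter, Finset.mem_univ, true_and, Finset.mem_powersetCard,
      Finset.subset_univ]
    constructor
    · rintro ⟨⟨a, ha⟩, hA⟩
      refine Finset.card_eq_one.2 ⟨a, Finset.eq_singleton_iff_unique_mem.2 ⟨ha, fun x hx => ?_⟩⟩
      obtain ⟨j, hj, h⟩ := exists_natCast_of_not_isFar (hA x hx a ha)
      obtain rfl : j = 0 := by omega
      simpa [sub_eq_zero] using h
    · intro h
      obtain ⟨a, rfl⟩ := Finset.card_eq_one.1 h
      refine ⟨Finset.singleton_nonempty a, fun x hx y hy => ?_⟩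
      rw [Finset.mem_singleton.1 hx, Finset.mem_singleton.1 hy, sub_self]
      exact not_isFar_zero
  rw [cyclicEuler, this, Finset.sum_congr rfl (g := fun _ => (1 : ℝ))]
  · simp [ZMod.card]
  · intro A hA
    simp [(Finset.mem_powersetCard.1 hA).2]

/-- The exponential of the `k`-th distance between points of the `n`-cycle. -/
noncomputable def chordExp (t : ℝ) (n k : ℕ) : ℝ :=
  Real.exp (-(2 * Real.sin (π * k / n)) * t)

lemma sin_pi_mul_div_le {n i j : ℕ} [NeZero n] (hij : i ≤ j) (hj : 2 * j ≤ n) :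
    Real.sin (π * i / n) ≤ Real.sin (π * j / n) := by
  have hn : (0 : ℝ) < n := Nat.cast_pos.2 (NeZero.pos n)
  have hij' : (i : ℝ) ≤ j := Nat.cast_le.2 hij
  have hj' : 2 * (j : ℝ) ≤ n := by exact_mod_cast hj
  have hpi := Real.pi_pos
  apply Real.sin_le_sin_of_le_of_le_pi_div_two
  · have : 0 ≤ π * i / n := by positivity
    linarith
  · rw [div_le_div_iff₀ hn two_pos]
    nlinarith
  · gcongr

lemma sin_pi_mul_div_nonneg {n j : ℕ} [NeZero n] (hj : 2 * j ≤ n) :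
    0 ≤ Real.sin (π * j / n) := by
  simpa using sin_pi_mul_div_le (n := n) (Nat.zero_le j) hj

lemma chordExp_succ_le {t : ℝ} (ht : 0 < t) {n k : ℕ} [NeZero n] (hk : 2 * k + 2 ≤ n) :
    chordExp t n (k + 1) ≤ chordExp t n k := by
  have := sin_pi_mul_div_le (n := n) (Nat.le_succ k) (by omega)
  rw [Nat.succ_eq_add_one] at this
  unfold chordExp
  gcongr

lemma dist_stdAddChar {n j : ℕ} [NeZero n] (hj : 2 * j ≤ n) {x y : ZMod n}
    (h : x - y = j ∨ x - y = -j) :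
    dist (ZMod.stdAddChar x) (ZMod.stdAddChar y) = 2 * Real.sin (π * j / n) := by
  wlog hxy : x - y = j generalizing x y
  · rw [dist_comm]
    have : y - x = j := by
      rw [← neg_sub, h.resolve_left hxy, neg_neg]
    rename_i ih
    exact ih (Or.inl this) this
  have hx : x = j + y := by rw [← hxy]; ring
  have hexp : ZMod.stdAddChar (j : ZMod n) =
      Complex.exp (Complex.I * ((2 * π * j / n : ℝ) : ℂ)) := by
    have := ZMod.stdAddChar_coe (N := n) (j : ℤ)
    rw [Int.cast_natCast] at this
    rw [this]
    congr 1
    push_cast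
    ring
  have hnorm : ‖ZMod.stdAddChar y‖ = 1 := by
    rw [ZMod.stdAddChar_apply, Circle.norm_coe]
  rw [hx, AddChar.map_add_eq_mul, dist_eq_norm, ← sub_one_mul, norm_mul, hnorm, mul_one, hexp,
    Complex.norm_exp_I_mul_ofReal_sub_one,
    show 2 * π * j / n / 2 = π * j / n by ring, Real.norm_of_nonneg]
  exact mul_nonneg two_pos.le (sin_pi_mul_div_nonneg hj)

lemma isCyclicClique_half (n : ℕ) (A : Finset (ZMod n)) : IsCyclicClique (n / 2) A := by
  rintro x - y - ⟨m, h1, h2, -⟩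
  omega

lemma IsCyclicClique.of_le {n k l : ℕ} {A : Finset (ZMod n)} (hA : IsCyclicClique k A)
    (hkl : k ≤ l) : IsCyclicClique l A :=
  fun x hx y hy ⟨m, h1, h2, h3⟩ => hA x hx y hy ⟨m, by omega, by omega, h3⟩

/-- The diameter of a nonempty set of points of the cycle is the chord of the least `k` for which
the set is a clique. -/
lemma exists_diam_image_stdAddChar {n : ℕ} [NeZero n] {A : Finset (ZMod n)} (hA : A.Nonempty) :
    ∃ d ≤ n / 2, (∀ k, IsCyclicClique k A ↔ d ≤ k) ∧
      Metric.diam (ZMod.stdAddChar '' (A : Set (ZMod n)) : Set ℂ) =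
        2 * Real.sin (π * d / n) := by
  classical
  have hex : ∃ k, IsCyclicClique k A := ⟨n / 2, isCyclicClique_half n A⟩
  set d := Nat.find hex with hd
  have hspec : IsCyclicClique d A := Nat.find_spec hex
  have hle : d ≤ n / 2 := Nat.find_min' hex (isCyclicClique_half n A)
  have hpair : ∃ x ∈ A, ∃ y ∈ A, x - y = d ∨ x - y = -d := by
    rcases Nat.eq_zero_or_pos d with h | h
    · obtain ⟨a, ha⟩ := hA
      exact ⟨a, ha, a, ha, by simp [h]⟩
    · have hmin : ¬ IsCyclicClique (d - 1) A := Nat.find_min hex (by omega)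
      simp only [IsCyclicClique, IsNearAll, not_forall, not_not] at hmin
      obtain ⟨x, hx, y, hy, hfar⟩ := hmin
      refine ⟨x, hx, y, hy, ?_⟩
      obtain ⟨j, hj, hxy⟩ := exists_natCast_of_not_isFar (hspec x hx y hy)
      obtain rfl | hjd := hj.eq_or_lt
      · exact hxy
      · obtain ⟨m, h1, h2, h3⟩ := hfar
        exfalso
        rcases hxy with h | h
        · have := natCast_zmod_injective_of_lt (by omega) (by omega) (h3.trans h)
          omega
        · have h' : ((m + j : ℕ) : ZMod n) = (0 : ℕ) := by
            push_cast; rw [h3, h]; ring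
          have := natCast_zmod_injective_of_lt (by omega) (by omega) h'
          omega
  refine ⟨d, hle, fun k => ⟨fun h => Nat.find_min' hex h, fun h => hspec.of_le h⟩,
    le_antisymm ?_ ?_⟩
  · refine Metric.diam_le_of_forall_dist_le
      (mul_nonneg two_pos.le (sin_pi_mul_div_nonneg (by omega))) ?_
    rintro _ ⟨x, hx, rfl⟩ _ ⟨y, hy, rfl⟩
    obtain ⟨j, hj, hxy⟩ := exists_natCast_of_not_isFar (hspec x hx y hy)
    rw [dist_stdAddChar (by omega) hxy]
    have := sin_pi_mul_div_le (n := n) hj (by omega)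
    linarith
  · obtain ⟨x, hx, y, hy, hxy⟩ := hpair
    rw [← dist_stdAddChar (by omega) hxy]
    exact Metric.dist_le_diam_of_mem (A.finite_toSet.image _).isBounded
      (Set.mem_image_of_mem _ hx) (Set.mem_image_of_mem _ hy)

lemma sum_neg_one_pow_card_sub_one_nonempty {α : Type*} [Fintype α] [DecidableEq α] [Nonempty α] :
    ∑ A : Finset α with A.Nonempty, (-1 : ℝ) ^ (A.card - 1) = 1 := by
  have h : ∑ A : Finset α, (-1 : ℝ) ^ A.card = 0 := by
    have := Finset.sum_powerset_neg_one_pow_card_of_nonempty (Finset.univ_nonempty (α := α))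
    rw [Finset.powerset_univ] at this
    exact_mod_cast this
  rw [← Finset.sum_filter_add_sum_filter_not _ (fun A : Finset α => A.Nonempty)] at h
  have h2 : ∑ A : Finset α with ¬ A.Nonempty, (-1 : ℝ) ^ A.card = 1 := by
    simp [Finset.not_nonempty_iff_eq_empty, Finset.filter_eq']
  rw [Finset.sum_congr rfl fun A hA => neg_one_pow_card_sub_one (Finset.mem_filter.1 hA).2,
    Finset.sum_neg_distrib]
  linarith

lemma euclCycle_eq_map (n : ℕ) [NeZero n] :
    euclCycle n = Finset.univ.map ⟨ZMod.stdAddChar (N := n), ZMod.injective_stdAddChar⟩ := by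
  have hcast : ∀ k : ℕ, Complex.exp (2 * (π : ℂ) * (k : ℂ) / (n : ℂ) * Complex.I) =
      ZMod.stdAddChar (k : ZMod n) := fun k => by
    have := ZMod.stdAddChar_coe (N := n) (k : ℤ)
    rw [Int.cast_natCast] at this
    rw [this]
    congr 1
    push_cast
    ring
  ext z
  simp only [euclCycle, hcast, Finset.mem_image, Finset.mem_range, Finset.mem_map,
    Finset.mem_univ, true_and, Function.Embedding.coeFn_mk]
  constructor
  · rintro ⟨k, -, rfl⟩
    exact ⟨k, rfl⟩
  · rintro ⟨x, rfl⟩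
    exact ⟨x.val, ZMod.val_lt x, by simp⟩

lemma ripsMag_map {X Y : Type*} [Fintype X] [MetricSpace Y] (f : X ↪ Y) (t : ℝ) :
    ripsMag (Finset.univ.map f) t = ∑ A : Finset X with A.Nonempty,
      (-1 : ℝ) ^ (A.card - 1) * Real.exp (-(Metric.diam (f '' (A : Set X))) * t) := by
  classical
  symm
  refine Finset.sum_bij (fun A _ => A.map f) ?_ ?_ ?_ ?_
  · intro A hA
    simpa [Finset.map_subset_map] using hA
  · intro A _ B _ h
    exact Finset.map_injective f h
  · intro B hB
    simp only [Finset.mem_filter, Finset.mem_powerset] at hB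
    obtain ⟨A, -, rfl⟩ := Finset.subset_map_iff.1 hB.1
    exact ⟨A, by simpa using hB.2, rfl⟩
  · intro A _
    simp

/-- The Rips magnitude of the cycle in terms of Euler characteristics. -/
lemma ripsMag_euclCycle_eq (n : ℕ) [NeZero n] (t : ℝ) :
    ripsMag (euclCycle n) t = chordExp t n (n / 2) +
      ∑ k ∈ Finset.range (n / 2), (chordExp t n k - chordExp t n (k + 1)) * cyclicEuler n k := by
  classical
  have hexp : ∀ A : Finset (ZMod n), A.Nonempty →
      Real.exp (-(Metric.diam (ZMod.stdAddChar '' (A : Set (ZMod n)) : Set ℂ)) * t) =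
        chordExp t n (n / 2) + ∑ k ∈ Finset.range (n / 2),
          if IsCyclicClique k A then chordExp t n k - chordExp t n (k + 1) else 0 := by
    intro A hA
    obtain ⟨d, hd, hclique, hdiam⟩ := exists_diam_image_stdAddChar hA
    have hfilter : (Finset.range (n / 2)).filter (fun k => d ≤ k) = Finset.Ico d (n / 2) := by
      ext k
      simp [and_comm]
    simp only [hclique]
    rw [← Finset.sum_filter, hfilter, hdiam, ← neg_inj, neg_add, ← Finset.sum_neg_distrib]
    simp only [neg_sub]
    rw [Finset.sum_Ico_sub _ hd, chordExp, chordExp]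
    ring
  rw [euclCycle_eq_map, ripsMag_map]
  simp only [Function.Embedding.coeFn_mk]
  rw [Finset.sum_congr rfl fun A hA => by rw [hexp A (Finset.mem_filter.1 hA).2, mul_add],
    Finset.sum_add_distrib, ← Finset.sum_mul, sum_neg_one_pow_card_sub_one_nonempty, one_mul]
  simp only [Finset.mul_sum]
  rw [Finset.sum_comm]
  congr 1
  refine Finset.sum_congr rfl fun k _ => ?_
  rw [cyclicEuler, Finset.mul_sum, ← Finset.filter_filter,
    Finset.sum_filter (IsCyclicClique k)]
  refine Finset.sum_congr rfl fun A _ => ?_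
  split_ifs <;> ring

/-- The part of the Rips magnitude of the `n`-cycle coming from its least and greatest distance. -/
noncomputable def extremalMag (t : ℝ) (n : ℕ) : ℝ :=
  chordExp t n (n / 2) + n * (1 - chordExp t n 1)

lemma ripsMag_euclCycle_eq_extremalMag_add {n : ℕ} [NeZero n] (hn : 2 ≤ n) (t : ℝ) :
    ripsMag (euclCycle n) t = extremalMag t n + ∑ k ∈ Finset.Ico 1 (n / 2),
      (chordExp t n k - chordExp t n (k + 1)) * cyclicEuler n k := by
  have h0 : chordExp t n 0 = 1 := by simp [chordExp]
  rw [ripsMag_euclCycle_eq, Finset.range_eq_Ico,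
    Finset.sum_eq_sum_Ico_succ_bot (show 0 < n / 2 by omega), cyclicEuler_zero, h0, extremalMag]
  ring

lemma extremalMag_le_ripsMag {n : ℕ} (hn : 2 ≤ n) {t : ℝ} (ht : 0 < t) :
    extremalMag t n ≤ ripsMag (euclCycle n) t := by
  have : NeZero n := ⟨by omega⟩
  rw [ripsMag_euclCycle_eq_extremalMag_add hn, le_add_iff_nonneg_right]
  refine Finset.sum_nonneg fun k hk => ?_
  have hk' := (Finset.mem_Ico.1 hk).2
  exact mul_nonneg (sub_nonneg.2 (chordExp_succ_le ht (by omega)))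
    (cyclicEuler_nonneg (by omega))

lemma ripsMag_eq_extremalMag_of_prime {p : ℕ} (hp : p.Prime) (t : ℝ) :
    ripsMag (euclCycle p) t = extremalMag t p := by
  have : Fact p.Prime := ⟨hp⟩
  rw [ripsMag_euclCycle_eq_extremalMag_add hp.two_le, add_eq_left]
  refine Finset.sum_eq_zero fun k hk => ?_
  have hk' := Finset.mem_Ico.1 hk
  rw [cyclicEuler_eq_zero_of_prime (by omega) (by omega), mul_zero]

open Filter Topology in
lemma tendsto_extremalMag (t : ℝ) :
    Tendsto (extremalMag t) atTop (𝓝 (Real.exp (-2 * t) + 2 * π * t)) := by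
  have hinv : Tendsto (fun n : ℕ => ((n : ℝ))⁻¹) atTop (𝓝 0) :=
    tendsto_inv_atTop_nhds_zero_nat
  have hhalf : Tendsto (fun n : ℕ => ((n / 2 : ℕ) : ℝ) / n) atTop (𝓝 (1 / 2)) := by
    have h := (tendsto_nat_floor_mul_div_atTop (R := ℝ) (a := 1 / 2) (by norm_num)).comp
      (tendsto_natCast_atTop_atTop (R := ℝ))
    refine h.congr fun n => ?_
    simp only [Function.comp_apply]
    rw [show (1 / 2 : ℝ) * n = (n : ℝ) / (2 : ℕ) by push_cast; ring, Nat.floor_div_natCast,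
      Nat.floor_natCast]
  unfold extremalMag
  refine Tendsto.add ?_ ?_
  · have hcont : Continuous fun x : ℝ => Real.exp (-(2 * Real.sin (π * x)) * t) := by fun_prop
    have h := (hcont.tendsto (1 / 2)).comp hhalf
    rw [show π * (1 / 2) = π / 2 by ring, Real.sin_pi_div_two, mul_one] at h
    refine h.congr fun n => ?_
    simp [chordExp, mul_div_assoc]
  · have hderiv : HasDerivAt (fun x : ℝ => 1 - Real.exp (-(2 * Real.sin (π * x)) * t))
        (2 * π * t) 0 := by
      have h1 : HasDerivAt (fun x : ℝ => π * x) π 0 := by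
        simpa using (hasDerivAt_id (0 : ℝ)).const_mul π
      refine ((h1.sin.const_mul 2).fun_neg.mul_const t).exp.const_sub 1 |>.congr_deriv ?_
      simp
    have h := hderiv.tendsto_slope_zero.comp (tendsto_nhdsWithin_iff.2 ⟨hinv, by
      filter_upwards [eventually_ne_atTop 0] with n hn
      simpa using hn⟩)
    refine h.congr fun n => ?_
    simp [chordExp, div_eq_mul_inv]

/-- for every `t > 0`,
`liminf_{n→∞} |tC_n^eucl|_Rips = e^{−2t} + 2πt`. -/
theorem ripsMag_euclCycle_liminf (t : ℝ) (ht : 0 < t) :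
    Filter.liminf (fun n : ℕ => ripsMag (euclCycle n) t) Filter.atTop =
      Real.exp (-2 * t) + 2 * π * t := by
  have hlim := tendsto_extremalMag t
  have hprime : ∃ᶠ n : ℕ in Filter.atTop, n.Prime :=
    Filter.frequently_atTop.2 fun N => (Nat.exists_infinite_primes N).imp fun _ h => h
  have hfreq : ∀ c, Real.exp (-2 * t) + 2 * π * t < c →
      ∃ᶠ n : ℕ in Filter.atTop, ripsMag (euclCycle n) t ≤ c := fun c hc =>
    (hprime.and_eventually (hlim.eventually_le_const hc)).mono fun n hn =>
      (ripsMag_eq_extremalMag_of_prime hn.1 t).trans_le hn.2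
  have hev : ∀ c, c < Real.exp (-2 * t) + 2 * π * t →
      ∀ᶠ n : ℕ in Filter.atTop, c ≤ ripsMag (euclCycle n) t := fun c hc => by
    filter_upwards [hlim.eventually_const_le hc, Filter.eventually_ge_atTop 2] with n h1 h2
    exact h1.trans (extremalMag_le_ripsMag h2 ht)
  refine le_antisymm (le_of_forall_gt_imp_ge_of_dense fun c hc => ?_)
    (le_of_forall_lt_imp_le_of_dense fun c hc => ?_)
  · exact Filter.liminf_le_of_frequently_le (hfreq c hc)
      (Filter.isBoundedUnder_of_eventually_ge (hev _ (sub_one_lt _)))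
  · exact Filter.le_liminf_of_le
      (Filter.IsCoboundedUnder.of_frequently_le (hfreq _ (lt_add_one _))) (hev c hc)
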